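/- For every λ ∈ 𝕋 and n ∈ ℕ, the multiplier algebra of the local Dirichlet space of order n at λ equals H_{λ,n} ∩ Mult(H_{σ,n-1}): Mult(H_{λ,n}) = H_{λ,n} ∩ Mult(H_{σ,n-1}). -/

import Mathlib

/-!
Write `H_{λ,n}` for the holomorphic functions with `Dloc lam n` finite and `H_{σ,m}` for those with
`Dsig m` finite. The heart of the matter is the decomposition

  `f ∈ H_{λ,m+1}` if and only if `f = c + (z - λ) g` on the disc with `c ∈ ℂ` and `g ∈ H_{σ,m}`

(`Dloc_lt_top_iff_exists`). By Parseval's identity in polar coordinates (`lintegral_disc`),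
`f ∈ H_{λ,m+1}` is a weighted `ℓ²` condition on the Taylor coefficients of `f^(m+1) / (z - λ)`.
After rotation by powers of `λ`, these coefficients `V` and those of `g`, called `H`, satisfy
`(K + 1) w_{K+1} (H_{K+1} - H_K) = V_{K+1} - V_K` with `w_k = (k + m)! / k!`. Summation by parts
then passes from `H` to `V` through Hardy's inequality (`seq_forward`) and from `V` to `H` through
Copson's inequality (`seq_backward`).

Given the decomposition, let `φ` be a multiplier of `H_{λ,m+1}` and `h ∈ H_{σ,m}`. Then `φ` itself
lies in `H_{λ,m+1}`, because `1` does, and `φ (z - λ) h = c + (z - λ) k` with `k ∈ H_{σ,m}`. Elements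
of `H_{σ,m}` are `O((1 - |z|)^(-1/2))` (`growth`), so letting `z → λ` radially gives `c = 0`, whence
`φ h = k`. Conversely, if `φ = c' + (z - λ) φ₁` lies in `H_{λ,m+1}` and multiplies `H_{σ,m}`, then
`φ (c + (z - λ) g) = c c' + (z - λ) (c φ₁ + φ g)`.
-/

open MeasureTheory Metric Complex
open scoped ENNReal NNReal

/-- The normalized Lebesgue area measure on ℂ (so the unit disc has mass 1). -/
noncomputable def nA : Measure ℂ := (ENNReal.ofReal Real.pi)⁻¹ • volume

/-- Taylor coefficient of `f` at the origin. -/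
noncomputable def coeff (f : ℂ → ℂ) (k : ℕ) : ℂ := iteratedDeriv k f 0 / (k.factorial : ℂ)

/-- `D_{σ,m}(f) = Σ_{k} C(k,m) |a_k|²` via Taylor coefficients. -/
noncomputable def Dsig (m : ℕ) (f : ℂ → ℂ) : ℝ≥0∞ :=
  ∑' k : ℕ, (k.choose m : ℝ≥0∞) * (‖coeff f k‖₊ : ℝ≥0∞) ^ 2

/-- The local Dirichlet-type integral of order `n` at `λ ∈ 𝕋`. -/
noncomputable def Dloc (lam : ℂ) (n : ℕ) (f : ℂ → ℂ) : ℝ≥0∞ :=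
  ENNReal.ofReal (1 / ((n.factorial : ℝ) * ((n-1).factorial : ℝ))) *
    ∫⁻ z in ball (0:ℂ) 1, (‖iteratedDeriv n f z‖₊ : ℝ≥0∞) ^ 2 *
      ENNReal.ofReal (((1 - ‖z‖^2) / ‖z - lam‖^2) * (1 - ‖z‖^2)^(n-1)) ∂nA

/-! ### Hardy and Copson inequalities -/

/-- Hardy's inequality in `ℓ²`: the Cesàro means of a square-summable sequence are square-summable.
The proof is by induction on the truncated inequality, strengthened by the boundary term
`2 S_N² / N`. -/
theorem summable_hardy {a : ℕ → ℝ} (h : Summable fun k => a k ^ 2) :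
    Summable fun K : ℕ => ((∑ k ∈ Finset.range (K + 1), a k) / (K + 1)) ^ 2 := by
  have key : ∀ N : ℕ, ∑ K ∈ Finset.range N, ((∑ k ∈ Finset.range (K + 1), a k) / (K + 1)) ^ 2
      + 2 * (∑ k ∈ Finset.range N, a k) ^ 2 / N ≤ 4 * ∑ k ∈ Finset.range N, a k ^ 2 := by
    intro N
    induction N with
    | zero => simp
    | succ N ih =>
      rw [Finset.sum_range_succ, Finset.sum_range_succ (fun k => a k ^ 2)]
      obtain ⟨A, hA⟩ : ∃ A, A = (∑ k ∈ Finset.range (N + 1), a k) / (N + 1) := ⟨_, rfl⟩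
      have hN : (0 : ℝ) < N + 1 := by positivity
      have hS : ∑ k ∈ Finset.range (N + 1), a k = (N + 1) * A := by
        rw [hA]; field_simp
      have hS' : ∑ k ∈ Finset.range N, a k = (N + 1) * A - a N := by
        rw [← hS, Finset.sum_range_succ]; ring
      rw [← hA, hS]
      rw [hS'] at ih
      have e1 : 2 * ((N + 1) * A) ^ 2 / ((N + 1 : ℕ) : ℝ) = 2 * (N + 1) * A ^ 2 := by
        push_cast; field_simp
      rw [e1]
      rcases Nat.eq_zero_or_pos N with rfl | hpos
      · simp at hS' ⊢
        have : A = a 0 := by linarith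
        rw [this]; nlinarith [sq_nonneg (a 0)]
      · have hNp : (0 : ℝ) < N := by exact_mod_cast hpos
        have e2 : 2 * ((N + 1) * A - a N) ^ 2 / (N : ℝ)
            = 2 * N * A ^ 2 + 4 * A * (A - a N) + 2 * (A - a N) ^ 2 / N := by
          field_simp; ring
        rw [e2] at ih
        have e3 : 0 ≤ 2 * (A - a N) ^ 2 / (N : ℝ) := by positivity
        nlinarith [sq_nonneg (A - 2 * a N)]
  refine summable_of_sum_range_le (c := 4 * ∑' k, a k ^ 2) (fun _ => sq_nonneg _) fun N => ?_
  have h1 := key N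
  have h2 : 0 ≤ 2 * (∑ k ∈ Finset.range N, a k) ^ 2 / (N : ℝ) := by positivity
  have h3 := h.sum_le_tsum (Finset.range N) (fun _ _ => sq_nonneg _)
  linarith

/-- Copson's inequality, dual to Hardy's: for a nonnegative square-summable `Q`, the tails
`∑_{k ≥ K} Q k / (k + 1)` are finite and square-summable in `K`. Each tail is written as the
difference of the sum and a partial sum. -/
theorem summable_copson {Q : ℕ → ℝ} (hQ : ∀ k, 0 ≤ Q k) (h : Summable fun k => Q k ^ 2) :
    ∃ L, HasSum (fun k : ℕ => Q k / (k + 1)) L ∧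
      Summable fun K : ℕ => (L - ∑ k ∈ Finset.range K, Q k / (k + 1)) ^ 2 := by
  set P : ℕ → ℝ := fun K => ∑ k ∈ Finset.range K, Q k / (k + 1) with hP
  set S := ∑' k, Q k ^ 2
  have key : ∀ (c : ℝ) (N : ℕ), ∑ K ∈ Finset.range N, (c - P K) ^ 2 - N * (c - P N) ^ 2
      ≤ 1 / 2 * ∑ K ∈ Finset.range N, (c - P K) ^ 2 + 2 * ∑ k ∈ Finset.range N, Q k ^ 2 := by
    intro c N
    induction N with
    | zero => simp
    | succ N ih =>
      rw [Finset.sum_range_succ, Finset.sum_range_succ (fun k => Q k ^ 2)]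
      have hN : (0 : ℝ) < N + 1 := by positivity
      have hPs : P (N + 1) = P N + Q N / (N + 1) := Finset.sum_range_succ _ _
      have e : ((N + 1 : ℕ) : ℝ) * (c - P (N + 1)) ^ 2
          = (N + 1) * (c - P N) ^ 2 - 2 * (c - P N) * Q N + Q N ^ 2 / (N + 1) := by
        rw [hPs]; push_cast; field_simp; ring
      rw [e]
      have : 0 ≤ Q N ^ 2 / (N + 1 : ℝ) := by positivity
      nlinarith [sq_nonneg ((c - P N) - 2 * Q N)]
  -- for `c = P M` the boundary term of `key` vanishes
  have fin : ∀ M, ∑ K ∈ Finset.range M, (P M - P K) ^ 2 ≤ 4 * S := by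
    intro M
    have := key (P M) M
    have h3 := h.sum_le_tsum (Finset.range M) (fun _ _ => sq_nonneg _)
    simp only [sub_self] at this
    change _ ≤ S at h3
    nlinarith
  have fin' : ∀ N M, N ≤ M → ∑ K ∈ Finset.range N, (P M - P K) ^ 2 ≤ 4 * S := fun N M hNM =>
    (Finset.sum_le_sum_of_subset_of_nonneg (Finset.range_mono hNM)
      (fun _ _ _ => sq_nonneg _)).trans (fin M)
  have hsum : Summable fun k : ℕ => Q k / (k + 1) := by
    refine summable_of_sum_range_le (c := 4 * S + 1)
      (fun k => div_nonneg (hQ k) (by positivity)) fun M => ?_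
    change P M ≤ _
    rcases Nat.eq_zero_or_pos M with rfl | hM
    · have := fin' 0 0 le_rfl
      simp [hP] at this ⊢; linarith
    · have := fin' 1 M hM
      simp [hP] at this
      nlinarith [sq_nonneg (P M - 1)]
  refine ⟨_, hsum.hasSum, summable_of_sum_range_le (c := 4 * S) (fun _ => sq_nonneg _) fun N => ?_⟩
  have ht : Filter.Tendsto (fun M => ∑ K ∈ Finset.range N, (P M - P K) ^ 2) Filter.atTop
      (nhds (∑ K ∈ Finset.range N, ((∑' k : ℕ, Q k / (k + 1)) - P K) ^ 2)) :=
    tendsto_finsetSum _ fun K _ => ((hsum.hasSum.tendsto_sum_nat).sub_const _).pow 2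
  exact le_of_tendsto ht (Filter.eventually_atTop.2 ⟨N, fun M hM => fin' N M hM⟩)

/-! ### The difference equation in weighted sequence spaces -/

/-- The weight `(k + m)! / k!`, which is `m!` times `(k + m).choose m`. As a weight on the
coefficients of index `k + m` it describes the space of functions with `Dsig m` finite. -/
noncomputable def wt (m k : ℕ) : ℝ := ((k + m).factorial : ℝ) / k.factorial

theorem wt_succ (m k : ℕ) : ((k : ℝ) + 1) * wt m (k + 1) = (k + m + 1) * wt m k := by
  unfold wt
  rw [show k + 1 + m = (k + m) + 1 by ring, Nat.factorial_succ, Nat.factorial_succ]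
  have := Nat.factorial_ne_zero k
  push_cast
  field_simp

theorem wt_pos (m k : ℕ) : 0 < wt m k := by unfold wt; positivity

theorem one_le_wt (m k : ℕ) : 1 ≤ wt m k := by
  unfold wt
  rw [one_le_div (by positivity)]
  exact_mod_cast Nat.factorial_le (by omega)

theorem wt_mono (m : ℕ) : Monotone (wt m) := by
  refine monotone_nat_of_le_succ fun k => ?_
  have h1 := wt_succ m k
  have h2 := wt_pos m k
  have : (0 : ℝ) < k + 1 := by positivity
  have : (0 : ℝ) ≤ m := by positivity
  by_contra! h
  nlinarith

theorem summable_sq_add_mul {x y : ℕ → ℝ} (c : ℝ) (hx : Summable fun k => x k ^ 2)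
    (hy : Summable fun k => y k ^ 2) : Summable fun k => (x k + c * y k) ^ 2 := by
  refine Summable.of_nonneg_of_le (fun _ => sq_nonneg _) (fun k => ?_)
    ((hx.mul_left 2).add (hy.mul_left (2 * c ^ 2)))
  nlinarith [sq_nonneg (x k - c * y k)]

/-- Sequence form of the implication from `g ∈ H_{σ,m}` to `(z - λ) g ∈ H_{λ,m+1}`: here `H` stands for
the rotated coefficients of `g` and `V` for those of `f^(m+1) / (z - λ)`, `f = (z - λ) g`. Summation
by parts expresses `V K` through `H K` and a weighted sum of the earlier `H k`, which Hardy's inequality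
controls. -/
theorem seq_forward {m : ℕ} {H V : ℕ → ℂ} (hV : V 0 = 0)
    (hrec : ∀ K : ℕ, ((((K : ℝ) + 1) * wt m (K + 1) : ℝ) : ℂ) * (H (K + 1) - H K)
      = V (K + 1) - V K)
    (hs : Summable fun k => wt m k * ‖H k‖ ^ 2) :
    Summable fun k : ℕ => ‖V (k + 1)‖ ^ 2 / (((k : ℝ) + 1) * wt m (k + 1) * (k + m + 2)) := by
  have hVeq : ∀ K : ℕ, V K = ((K * wt m K : ℝ) : ℂ) * H K
      - (m + 1) * ∑ k ∈ Finset.range K, ((wt m k : ℝ) : ℂ) * H k := by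
    intro K
    induction K with
    | zero => simp [hV]
    | succ K ih =>
      have h1 := hrec K
      have h2 : ((((K : ℝ) + 1) * wt m (K + 1) : ℝ) : ℂ) = (K + m + 1) * ((wt m K : ℝ) : ℂ) := by
        rw [wt_succ]; push_cast; ring
      rw [Finset.sum_range_succ]
      push_cast at h1 h2 ih ⊢
      linear_combination -h1 + ih - H K * h2
  set a : ℕ → ℝ := fun k => √(wt m k) * ‖H k‖ with ha
  have ha2 : ∀ k, a k ^ 2 = wt m k * ‖H k‖ ^ 2 := fun k => by
    rw [ha]; simp only; rw [mul_pow, Real.sq_sqrt (wt_pos m k).le]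
  have hsa : Summable fun k => a k ^ 2 := by simpa only [ha2] using hs
  have hmain := summable_sq_add_mul (m + 1 : ℝ) ((summable_nat_add_iff 1).2 hsa) (summable_hardy hsa)
  refine Summable.of_nonneg_of_le (fun k => ?_) (fun k => ?_) hmain
  · have := wt_pos m (k + 1); positivity
  have hw := wt_pos m (k + 1)
  have hsq := Real.sq_sqrt hw.le
  have hsp := Real.sqrt_pos.2 hw
  have hk : (0 : ℝ) < k + 1 := by positivity
  have hnorm : ‖V (k + 1)‖ ≤ ((k + 1) * √(wt m (k + 1))) * (a (k + 1)
      + (m + 1) * ((∑ j ∈ Finset.range (k + 1), a j) / (k + 1))) := by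
    rw [hVeq]
    refine (norm_sub_le _ _).trans ?_
    have b1 : ‖(((k + 1 : ℕ) * wt m (k + 1) : ℝ) : ℂ) * H (k + 1)‖
        = ((k + 1) * √(wt m (k + 1))) * a (k + 1) := by
      rw [norm_mul, Complex.norm_real, Real.norm_of_nonneg (by positivity), ha]
      simp only
      push_cast
      linear_combination -((k : ℝ) + 1) * ‖H (k + 1)‖ * hsq
    have b2 : ‖((m : ℂ) + 1) * ∑ j ∈ Finset.range (k + 1), ((wt m j : ℝ) : ℂ) * H j‖
        ≤ (m + 1) * (√(wt m (k + 1)) * ∑ j ∈ Finset.range (k + 1), a j) := by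
      rw [norm_mul]
      have : ‖(m : ℂ) + 1‖ = m + 1 := by exact_mod_cast Complex.norm_natCast (m + 1)
      rw [this]
      refine mul_le_mul_of_nonneg_left ((norm_sum_le _ _).trans ?_) (by positivity)
      rw [Finset.mul_sum]
      refine Finset.sum_le_sum fun j hj => ?_
      have hj' : wt m j ≤ wt m (k + 1) := wt_mono m (Finset.mem_range.1 hj).le
      rw [norm_mul, Complex.norm_real, Real.norm_of_nonneg (wt_pos m j).le, ha]
      simp only
      calc wt m j * ‖H j‖ = √(wt m j) * (√(wt m j) * ‖H j‖) := by
            rw [← mul_assoc, Real.mul_self_sqrt (wt_pos m j).le]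
        _ ≤ _ := by gcongr
    calc _ ≤ _ := add_le_add b1.le b2
      _ = _ := by field_simp
  rw [div_le_iff₀ (by positivity)]
  refine (pow_le_pow_left₀ (norm_nonneg _) hnorm 2).trans ?_
  rw [mul_pow, mul_comm, mul_pow, hsq]
  refine mul_le_mul_of_nonneg_left ?_ (sq_nonneg _)
  have : (0 : ℝ) ≤ m := by positivity
  have h3 : 0 ≤ (k + 1 : ℝ) * wt m (k + 1) := by positivity
  nlinarith

/-- Converse of `seq_forward`: the difference equation can be solved for a sequence `H` that is
square-summable with weight `wt m`. The solution is
`H K = V K / (K * wt m K) - (m + 1) * R K` with `R K` a tail of a convergent series, and Copson's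
inequality controls that tail. -/
theorem seq_backward {m : ℕ} {V : ℕ → ℂ} (hV : V 0 = 0)
    (hs : Summable fun k : ℕ => ‖V (k + 1)‖ ^ 2 / (((k : ℝ) + 1) * wt m (k + 1) * (k + m + 2))) :
    ∃ H : ℕ → ℂ, (∀ K : ℕ, ((((K : ℝ) + 1) * wt m (K + 1) : ℝ) : ℂ) * (H (K + 1) - H K)
      = V (K + 1) - V K) ∧ Summable fun k => wt m k * ‖H k‖ ^ 2 := by
  set Q : ℕ → ℝ := fun k => ‖V k‖ / (k * √(wt m k)) with hQ
  have hQ0 : ∀ k, 0 ≤ Q k := fun k => by rw [hQ]; positivity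
  have hQs : Summable fun k => Q k ^ 2 := by
    rw [← summable_nat_add_iff 1]
    refine Summable.of_nonneg_of_le (fun _ => sq_nonneg _) (fun k => ?_) (hs.mul_left (m + 2 : ℝ))
    have hw := wt_pos m (k + 1)
    have hsq := Real.sq_sqrt hw.le
    rw [hQ]; simp only
    rw [div_pow, mul_pow, hsq, mul_div_assoc', div_le_div_iff₀ (by positivity) (by positivity)]
    push_cast
    have : (0 : ℝ) ≤ m := by positivity
    have : (k + m + 2 : ℝ) ≤ (m + 2) * (k + 1) := by
      have : (0 : ℝ) ≤ k := by positivity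
      nlinarith
    have h3 : 0 ≤ ‖V (k + 1)‖ ^ 2 * ((k + 1 : ℝ) * wt m (k + 1)) := by positivity
    nlinarith
  obtain ⟨L, hL, hLs⟩ := summable_copson hQ0 hQs
  set t : ℕ → ℂ := fun j => V j / ((j * (j + m + 1) * wt m j : ℝ) : ℂ) with ht
  have htQ : ∀ j, √(wt m j) * ‖t j‖ ≤ Q j / (j + 1) := by
    intro j
    rcases Nat.eq_zero_or_pos j with rfl | hj
    · simp [ht, hQ]
    have hj' : (0 : ℝ) < j := by exact_mod_cast hj
    have hw := wt_pos m j
    have hsq := Real.sq_sqrt hw.le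
    have hsp := Real.sqrt_pos.2 hw
    rw [ht, hQ]; simp only
    rw [norm_div, Complex.norm_real, Real.norm_of_nonneg (by positivity)]
    have e : √(wt m j) * (‖V j‖ / (j * (j + m + 1) * wt m j))
        = ‖V j‖ / (j * √(wt m j)) / (j + m + 1) := by
      nth_rewrite 2 [← hsq]
      field_simp
    rw [e]
    gcongr
    have : (0 : ℝ) ≤ m := by positivity
    linarith
  have htsum : Summable t := by
    refine Summable.of_norm_bounded hL.summable fun j => le_trans ?_ (htQ j)
    have : 1 ≤ √(wt m j) := Real.one_le_sqrt.2 (one_le_wt m j)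
    nlinarith [norm_nonneg (t j)]
  set R : ℕ → ℂ := fun K => (∑' j, t j) - ∑ j ∈ Finset.range K, t j with hR
  have hRtail : ∀ K, R K = ∑' j, t (j + K) := fun K => by
    rw [hR]; simp only; rw [← htsum.sum_add_tsum_nat_add K]; ring
  have hRb : ∀ K, √(wt m K) * ‖R K‖ ≤ L - ∑ k ∈ Finset.range K, Q k / (k + 1) := by
    intro K
    have hQt : L - ∑ k ∈ Finset.range K, Q k / (k + 1)
        = ∑' j : ℕ, Q (j + K) / ((j + K : ℕ) + 1) := by
      rw [← hL.tsum_eq, ← hL.summable.sum_add_tsum_nat_add K]; ring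
    have hsK : Summable fun j : ℕ => Q (j + K) / (((j + K : ℕ) : ℝ) + 1) :=
      (summable_nat_add_iff (f := fun k : ℕ => Q k / ((k : ℝ) + 1)) K).2 hL.summable
    have hb : ∀ j, √(wt m K) * ‖t (j + K)‖ ≤ Q (j + K) / (((j + K : ℕ) : ℝ) + 1) := fun j =>
      le_trans (mul_le_mul_of_nonneg_right (Real.sqrt_le_sqrt (wt_mono m (by omega)))
        (norm_nonneg _)) (htQ (j + K))
    have hn : Summable fun j => ‖t (j + K)‖ :=
      ((summable_nat_add_iff (f := t) K).2 htsum).norm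
    rw [hQt, hRtail]
    calc _ ≤ √(wt m K) * ∑' j, ‖t (j + K)‖ :=
          mul_le_mul_of_nonneg_left (norm_tsum_le_tsum_norm hn) (Real.sqrt_nonneg _)
      _ = ∑' j, √(wt m K) * ‖t (j + K)‖ := tsum_mul_left.symm
      _ ≤ _ := (hn.mul_left _).tsum_le_tsum hb hsK
  refine ⟨fun K => V K / ((K * wt m K : ℝ) : ℂ) - (m + 1) * R K, fun K => ?_, ?_⟩
  · have hRs : R (K + 1) = R K - t K := by
      rw [hR]; simp only; rw [Finset.sum_range_succ]; ring
    have hw := wt_pos m K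
    have hw1 := wt_pos m (K + 1)
    have e1 : V (K + 1) / (((K + 1 : ℕ) * wt m (K + 1) : ℝ) : ℂ)
        * ((((K : ℝ) + 1) * wt m (K + 1) : ℝ) : ℂ) = V (K + 1) := by
      push_cast
      refine div_mul_cancel₀ _ ?_
      have : ((wt m (K + 1) : ℝ) : ℂ) ≠ 0 := by exact_mod_cast hw1.ne'
      have : (K : ℂ) + 1 ≠ 0 := by exact_mod_cast K.succ_ne_zero
      positivity
    have e2 : ((((K : ℝ) + 1) * wt m (K + 1) : ℝ) : ℂ)
        * (V K / ((K * wt m K : ℝ) : ℂ) - (m + 1) * t K) = V K := by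
      rw [wt_succ, ht]; simp only
      rcases Nat.eq_zero_or_pos K with rfl | hK
      · simp [hV]
      have h1 : ((wt m K : ℝ) : ℂ) ≠ 0 := by exact_mod_cast hw.ne'
      have h2 : (K : ℂ) ≠ 0 := by exact_mod_cast hK.ne'
      have h3 : (K : ℂ) + m + 1 ≠ 0 := by exact_mod_cast (K + m).succ_ne_zero
      push_cast
      field_simp
      ring
    simp only [hRs]
    linear_combination e1 - e2
  · refine Summable.of_nonneg_of_le (fun k => by have := wt_pos m k; positivity) (fun k => ?_)
      (summable_sq_add_mul (m + 1 : ℝ) hQs hLs)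
    have hw := wt_pos m k
    have hsq := Real.sq_sqrt hw.le
    have hsp := Real.sqrt_pos.2 hw
    rw [← hsq, ← mul_pow]
    refine pow_le_pow_left₀ (by positivity) ?_ 2
    have b1 : √(wt m k) * ‖V k / ((k * wt m k : ℝ) : ℂ)‖ = Q k := by
      rw [hQ, norm_div, Complex.norm_real, Real.norm_of_nonneg (by positivity)]
      simp only
      rcases Nat.eq_zero_or_pos k with rfl | hk
      · simp
      have : (0 : ℝ) < k := by exact_mod_cast hk
      nth_rewrite 2 [← hsq]
      field_simp
    have b2 : ‖((m : ℂ) + 1) * R k‖ = (m + 1) * ‖R k‖ := by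
      rw [norm_mul]
      congr 1
      exact_mod_cast Complex.norm_natCast (m + 1)
    calc _ ≤ √(wt m k) * (‖V k / ((k * wt m k : ℝ) : ℂ)‖ + ‖((m : ℂ) + 1) * R k‖) :=
          mul_le_mul_of_nonneg_left (norm_sub_le _ _) hsp.le
      _ = Q k + (m + 1) * (√(wt m k) * ‖R k‖) := by rw [mul_add, b1, b2]; ring
      _ ≤ _ := by
        have := hRb k
        gcongr

/-! ### Bergman norms in terms of Taylor coefficients -/

theorem hasSum_coeff {f : ℂ → ℂ} (hf : DifferentiableOn ℂ f (ball (0 : ℂ) 1)) {z : ℂ}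
    (hz : z ∈ ball (0 : ℂ) 1) : HasSum (fun k => coeff f k * z ^ k) (f z) := by
  have h := Complex.hasSum_taylorSeries_on_ball hf hz
  have e : (fun k => coeff f k * z ^ k)
      = fun k : ℕ => (k.factorial : ℂ)⁻¹ • (z - 0) ^ k • iteratedDeriv k f 0 := by
    funext k
    simp [coeff, div_eq_inv_mul]; ring
  rw [e]
  exact h

theorem tsum_ofReal_lt_top {a : ℕ → ℝ} (ha : ∀ k, 0 ≤ a k) :
    ∑' k, ENNReal.ofReal (a k) < ⊤ ↔ Summable a := by
  refine ⟨fun h => ?_, fun h => ?_⟩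
  · have := ENNReal.summable_toReal h.ne
    simpa only [ENNReal.toReal_ofReal (ha _)] using this
  · rw [← ENNReal.ofReal_tsum_of_nonneg ha h]; exact ENNReal.ofReal_lt_top

theorem integral_exp_int (d : ℤ) (hd : d ≠ 0) :
    ∫ θ in Set.Ioo (-Real.pi) Real.pi, Complex.exp ((d : ℂ) * I * (θ : ℂ)) = 0 := by
  rw [← integral_Ioc_eq_integral_Ioo, ← intervalIntegral.integral_of_le (by linarith [Real.pi_pos]),
    integral_exp_mul_complex (by simp [hd])]
  have : Complex.exp ((d : ℂ) * I * (Real.pi : ℂ)) = Complex.exp ((d : ℂ) * I * ((-Real.pi : ℝ) : ℂ)) := by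
    rw [Complex.exp_eq_exp_iff_exists_int]
    exact ⟨d, by push_cast; ring⟩
  rw [this, sub_self, zero_div]

/-- Parseval's identity for an absolutely convergent one-sided Fourier series. -/
theorem integral_norm_sq_fourier {a : ℕ → ℂ} (ha : Summable fun k => ‖a k‖) :
    ∫⁻ θ in Set.Ioo (-Real.pi) Real.pi,
      (‖∑' k : ℕ, a k * Complex.exp (θ * I) ^ k‖₊ : ℝ≥0∞) ^ 2
      = ∑' k, ENNReal.ofReal (2 * Real.pi * ‖a k‖ ^ 2) := by
  set μ : Measure ℝ := volume.restrict (Set.Ioo (-Real.pi) Real.pi) with hμ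
  set F : ℝ → ℂ := fun θ => ∑' k : ℕ, a k * Complex.exp (θ * I) ^ k with hF
  have hnt : ∀ (k : ℕ) (θ : ℝ), ‖a k * Complex.exp (θ * I) ^ k‖ = ‖a k‖ := fun k θ => by
    rw [norm_mul, norm_pow, Complex.norm_exp_ofReal_mul_I, one_pow, mul_one]
  have hFc : Continuous F :=
    continuous_tsum (fun k => by fun_prop) ha fun k θ => (hnt k θ).le
  have hFb : ∀ θ, ‖F θ‖ ≤ ∑' k, ‖a k‖ := fun θ =>
    tsum_of_norm_bounded ha.hasSum fun k => (hnt k θ).le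
  have hFint : Integrable (fun θ => ‖F θ‖ ^ 2) μ := by
    refine Integrable.of_bound (hFc.norm.pow 2).aestronglyMeasurable ((∑' k, ‖a k‖) ^ 2)
      (Filter.Eventually.of_forall fun θ => ?_)
    rw [Real.norm_of_nonneg (by positivity)]
    exact pow_le_pow_left₀ (norm_nonneg _) (hFb θ) 2
  -- `‖F θ‖²` is the sum of the double series `G`, whose off-diagonal terms integrate to zero
  set G : ℕ × ℕ → ℝ → ℂ := fun p θ =>
    (a p.1 * (starRingEnd ℂ) (a p.2)) * Complex.exp (((p.1 - p.2 : ℤ) : ℂ) * I * (θ : ℂ)) with hG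
  have hGeq : ∀ p θ, G p θ = (a p.1 * Complex.exp (θ * I) ^ p.1) *
      (starRingEnd ℂ) (a p.2 * Complex.exp (θ * I) ^ p.2) := by
    intro p θ
    rw [hG]; simp only [map_mul, ← Complex.exp_conj, ← Complex.exp_nat_mul]
    rw [show ∀ w x y z : ℂ, (w * x) * (y * z) = w * y * (x * z) by intros; ring, ← Complex.exp_add]
    congr 2
    simp; ring
  have hGn : ∀ p θ, ‖G p θ‖ = ‖a p.1‖ * ‖a p.2‖ := fun p θ => by
    rw [hGeq, norm_mul, RCLike.norm_conj, hnt, hnt]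
  have hGsum : ∀ θ, ∑' p, G p θ = ((‖F θ‖ ^ 2 : ℝ) : ℂ) := by
    intro θ
    have hs : Summable fun k => a k * Complex.exp (θ * I) ^ k :=
      Summable.of_norm (by simpa only [hnt] using ha)
    have hs' : Summable fun k => ‖a k * Complex.exp (θ * I) ^ k‖ := by simpa only [hnt] using ha
    have hs2 : Summable fun k => ‖(starRingEnd ℂ) (a k * Complex.exp (θ * I) ^ k)‖ := by
      simpa only [RCLike.norm_conj] using hs'
    rw [tsum_congr fun p => hGeq p θ, ← tsum_mul_tsum_of_summable_norm hs' hs2,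
      ← Complex.conj_tsum, Complex.mul_conj, Complex.normSq_eq_norm_sq]
  have hGint : ∀ p, Integrable (G p) μ := fun p => by
    refine Integrable.of_bound ?_ (‖a p.1‖ * ‖a p.2‖)
      (Filter.Eventually.of_forall fun θ => (hGn p θ).le)
    exact Continuous.aestronglyMeasurable (by fun_prop)
  have hmain := hasSum_integral_of_summable_integral_norm (μ := μ) hGint (by
    simp only [hGn, integral_const, smul_eq_mul]
    exact (by simpa using ha.mul_norm ha :
      Summable fun p : ℕ × ℕ => ‖a p.1‖ * ‖a p.2‖).mul_left _)
  have hvol : μ.real Set.univ = 2 * Real.pi := by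
    rw [hμ, measureReal_restrict_apply_univ, Real.volume_real_Ioo_of_le (by linarith [Real.pi_pos])]
    ring
  have hGi : ∀ p, ∫ θ, G p θ ∂μ = if p.1 = p.2 then ((2 * Real.pi * ‖a p.1‖ ^ 2 : ℝ) : ℂ) else 0 := by
    rintro ⟨j, k⟩
    simp only [hG]
    rw [integral_const_mul]
    split_ifs with h
    · subst h
      simp only [sub_self, Int.cast_zero, zero_mul, Complex.exp_zero, integral_const, hvol,
        Complex.mul_conj, Complex.normSq_eq_norm_sq]
      simp; ring
    · rw [integral_exp_int _ (by omega), mul_zero]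
  have hdiag : HasSum (fun k => ((2 * Real.pi * ‖a k‖ ^ 2 : ℝ) : ℂ)) (∫ θ, ((‖F θ‖ ^ 2 : ℝ) : ℂ) ∂μ) := by
    have hinj : Function.Injective fun k : ℕ => (k, k) := fun x y h => by simpa using h
    have := hmain
    simp only [hGsum] at this
    rw [← hinj.hasSum_iff] at this
    · have e : ((fun x => ∫ θ, G x θ ∂μ) ∘ fun k : ℕ => (k, k))
          = fun k => ((2 * Real.pi * ‖a k‖ ^ 2 : ℝ) : ℂ) := by
        funext k
        simp [hGi]
      rw [e] at this
      exact this
    · rintro ⟨j, k⟩ hjk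
      rw [hGi, if_neg]
      rintro h
      exact hjk ⟨j, by simp_all⟩
  have hreal : HasSum (fun k => 2 * Real.pi * ‖a k‖ ^ 2) (∫ θ, ‖F θ‖ ^ 2 ∂μ) := by
    rw [integral_complex_ofReal] at hdiag
    exact Complex.hasSum_ofReal.1 hdiag
  rw [← ENNReal.ofReal_tsum_of_nonneg (fun k => by positivity) hreal.summable, hreal.tsum_eq,
    ofReal_integral_eq_lintegral_ofReal hFint (Filter.Eventually.of_forall fun θ => by positivity)]
  refine lintegral_congr fun θ => ?_
  rw [ENNReal.ofReal_pow (norm_nonneg _), ofReal_norm]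
  rfl

theorem lintegral_circle {u : ℂ → ℂ} (hu : DifferentiableOn ℂ u (ball (0 : ℂ) 1)) {r : ℝ}
    (hr0 : 0 < r) (hr1 : r < 1) :
    ∫⁻ θ in Set.Ioo (-Real.pi) Real.pi, (‖u (r * Complex.exp (θ * I))‖₊ : ℝ≥0∞) ^ 2
      = ∑' k, ENNReal.ofReal (2 * Real.pi * ‖coeff u k‖ ^ 2 * r ^ (2 * k)) := by
  have hmem : ∀ θ : ℝ, (r : ℂ) * Complex.exp (θ * I) ∈ ball (0 : ℂ) 1 := fun θ => by
    rw [mem_ball_zero_iff, norm_mul, Complex.norm_exp_ofReal_mul_I, mul_one, Complex.norm_real,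
      Real.norm_of_nonneg hr0.le]; exact hr1
  have hsum : Summable fun k => ‖coeff u k * (r : ℂ) ^ k‖ := by
    have := (hasSum_coeff hu (hmem 0)).summable.norm
    simpa using this
  have := integral_norm_sq_fourier hsum
  convert this using 1
  · refine lintegral_congr fun θ => ?_
    rw [← (hasSum_coeff hu (hmem θ)).tsum_eq]
    simp only [mul_pow, mul_assoc]
  · refine tsum_congr fun k => ?_
    rw [norm_mul, norm_pow, Complex.norm_real, Real.norm_of_nonneg hr0.le]
    congr 1; ring

/-- The Beta integral `∫₀¹ r^(2*k+1) (1 - r²)^n dr`, by induction on `n` through integration by parts. -/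
theorem integral_radial (n k : ℕ) :
    ∫ r in (0 : ℝ)..1, r ^ (2 * k + 1) * (1 - r ^ 2) ^ n
      = (k.factorial * n.factorial : ℝ) / (2 * (k + n + 1).factorial) := by
  induction n generalizing k with
  | zero =>
    simp only [pow_zero, mul_one, integral_pow]
    rw [add_zero, Nat.factorial_succ]
    have := Nat.factorial_ne_zero k
    push_cast
    simp
    field_simp
    ring
  | succ n ih =>
    have hd : ∀ x : ℝ, HasDerivAt (fun r : ℝ => r ^ (2 * k + 2) * (1 - r ^ 2) ^ (n + 1))
        ((2 * k + 2) * (x ^ (2 * k + 1) * (1 - x ^ 2) ^ (n + 1))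
          - (2 * (n + 1)) * (x ^ (2 * (k + 1) + 1) * (1 - x ^ 2) ^ n)) x := by
      intro x
      have h1 := (hasDerivAt_pow (2 * k + 2) x).fun_mul
        ((((hasDerivAt_pow 2 x).const_sub 1)).fun_pow (n + 1))
      refine h1.congr_deriv ?_
      push_cast
      ring
    have hval := intervalIntegral.integral_eq_sub_of_hasDerivAt (a := 0) (b := 1)
      (fun x _ => hd x) (Continuous.intervalIntegrable (by fun_prop) _ _)
    rw [intervalIntegral.integral_sub (Continuous.intervalIntegrable (by fun_prop) _ _)
      (Continuous.intervalIntegrable (by fun_prop) _ _), intervalIntegral.integral_const_mul,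
      intervalIntegral.integral_const_mul, ih] at hval
    simp only [one_pow, sub_self, mul_zero, ne_eq, Nat.add_eq_zero_iff, one_ne_zero, and_false,
      not_false_eq_true, zero_pow] at hval
    have hk : (0 : ℝ) < 2 * k + 2 := by positivity
    have : k + 1 + n + 1 = k + (n + 1) + 1 := by ring
    rw [this] at hval
    have h3 := Nat.factorial_ne_zero (k + (n + 1) + 1)
    rw [Nat.factorial_succ k] at hval
    rw [Nat.factorial_succ n]
    push_cast at hval ⊢
    field_simp at hval ⊢
    have hk' : (k : ℝ) + 1 ≠ 0 := by positivity
    refine mul_left_cancel₀ hk' ?_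
    have h0 : (0 : ℝ) ^ (2 * k + 2) = 0 := by simp
    rw [h0] at hval
    linear_combination hval

/-- The weighted Bergman norm of a holomorphic function in terms of its Taylor coefficients. -/
theorem lintegral_disc {u : ℂ → ℂ} (hu : DifferentiableOn ℂ u (ball (0 : ℂ) 1)) (n : ℕ) :
    ∫⁻ z in ball (0 : ℂ) 1, (‖u z‖₊ : ℝ≥0∞) ^ 2 * ENNReal.ofReal ((1 - ‖z‖ ^ 2) ^ n)
      = ∑' k : ℕ, ENNReal.ofReal (Real.pi * n.factorial *
          (‖coeff u k‖ ^ 2 * (k.factorial / (k + n + 1).factorial))) := by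
  set g : ℂ → ℝ≥0∞ := fun z => (‖u z‖₊ : ℝ≥0∞) ^ 2 * ENNReal.ofReal ((1 - ‖z‖ ^ 2) ^ n) with hg
  have hgm : Measurable ((ball (0 : ℂ) 1).indicator g) := by
    have hum : Measurable ((ball (0 : ℂ) 1).indicator u) := by
      classical
      rw [← Set.piecewise_eq_indicator]
      exact hu.continuousOn.measurable_piecewise continuousOn_const measurableSet_ball
    have : (ball (0 : ℂ) 1).indicator g = (ball (0 : ℂ) 1).indicator fun z =>
        (‖(ball (0 : ℂ) 1).indicator u z‖₊ : ℝ≥0∞) ^ 2 * ENNReal.ofReal ((1 - ‖z‖ ^ 2) ^ n) := by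
      refine Set.indicator_congr fun z hz => ?_
      rw [Set.indicator_of_mem hz]
    rw [this]
    refine Measurable.indicator ?_ measurableSet_ball
    fun_prop
  rw [← lintegral_indicator measurableSet_ball, ← Complex.lintegral_comp_polarCoord_symm,
    show polarCoord.target = Set.Ioi (0 : ℝ) ×ˢ Set.Ioo (-Real.pi) Real.pi from rfl, Measure.volume_eq_prod, ← Measure.prod_restrict, lintegral_prod]
  swap
  · refine Measurable.aemeasurable ?_
    simp only [Complex.polarCoord_symm_apply, smul_eq_mul]
    refine Measurable.mul (by fun_prop) (hgm.comp ?_)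
    exact Continuous.measurable (by fun_prop)
  have hexp : ∀ r θ : ℝ, Complex.polarCoord.symm (r, θ) = r * Complex.exp (θ * I) := fun r θ => by
    rw [Complex.polarCoord_symm_apply, Complex.exp_mul_I]; simp
  have hinner : ∀ r ∈ Set.Ioi (0 : ℝ), ∫⁻ θ in Set.Ioo (-Real.pi) Real.pi,
      ENNReal.ofReal (r, θ).1 • (ball (0 : ℂ) 1).indicator g (Complex.polarCoord.symm (r, θ))
      = (Set.Ioo (0 : ℝ) 1).indicator (fun r => ∑' k : ℕ, ENNReal.ofReal
        (2 * Real.pi * ‖coeff u k‖ ^ 2 * (r ^ (2 * k + 1) * (1 - r ^ 2) ^ n))) r := by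
    intro r hr
    have hr : 0 < r := hr
    have hnorm : ∀ θ : ℝ, ‖(r : ℂ) * Complex.exp (θ * I)‖ = r := fun θ => by
      rw [norm_mul, Complex.norm_exp_ofReal_mul_I, mul_one, Complex.norm_real,
        Real.norm_of_nonneg hr.le]
    by_cases hr1 : r < 1
    · rw [Set.indicator_of_mem (show r ∈ Set.Ioo (0 : ℝ) 1 from ⟨hr, hr1⟩)]
      have hp : 0 ≤ (1 - r ^ 2) := by nlinarith
      calc _ = ∫⁻ θ in Set.Ioo (-Real.pi) Real.pi, ENNReal.ofReal (r * (1 - r ^ 2) ^ n) *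
            (‖u (r * Complex.exp (θ * I))‖₊ : ℝ≥0∞) ^ 2 := by
              refine lintegral_congr fun θ => ?_
              rw [hexp, Set.indicator_of_mem (by rw [mem_ball_zero_iff, hnorm]; exact hr1), hg]
              simp only [hnorm, smul_eq_mul]
              rw [ENNReal.ofReal_mul hr.le]
              ring
        _ = _ := by
              rw [lintegral_const_mul' _ _ ENNReal.ofReal_ne_top, lintegral_circle hu hr hr1,
                ← ENNReal.tsum_mul_left]
              refine tsum_congr fun k => ?_
              rw [← ENNReal.ofReal_mul (by positivity)]
              congr 1; ring
    · rw [Set.indicator_of_notMem (fun h => hr1 h.2)]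
      simp only [hexp]
      have : ∀ θ : ℝ, (ball (0 : ℂ) 1).indicator g (r * Complex.exp (θ * I)) = 0 := fun θ =>
        Set.indicator_of_notMem (by rw [mem_ball_zero_iff, hnorm]; exact hr1) _
      simp [this]
  rw [setLIntegral_congr_fun measurableSet_Ioi hinner, lintegral_indicator measurableSet_Ioo,
    Measure.restrict_restrict measurableSet_Ioo,
    Set.inter_eq_left.2 (fun x hx => hx.1), lintegral_tsum (fun k => by fun_prop)]
  refine tsum_congr fun k => ?_
  rw [← ofReal_integral_eq_lintegral_ofReal]
  · rw [← integral_Ioc_eq_integral_Ioo, ← intervalIntegral.integral_of_le zero_le_one,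
      intervalIntegral.integral_const_mul, integral_radial]
    congr 1
    have := Nat.factorial_ne_zero (k + n + 1)
    field_simp
  · exact (Continuous.integrableOn_Icc (by fun_prop)).mono_set Set.Ioo_subset_Icc_self
  · refine (ae_restrict_iff' measurableSet_Ioo).2 (Filter.Eventually.of_forall fun r hr => ?_)
    have h0 : 0 < r := hr.1
    have h1 : r < 1 := hr.2
    have : 0 ≤ 1 - r ^ 2 := by nlinarith
    simp only [Pi.zero_apply]
    positivity

/-! ### Taylor coefficients of sums, products and derivatives -/

theorem coeff_congr {f g : ℂ → ℂ} (h : Set.EqOn f g (ball (0 : ℂ) 1)) (k : ℕ) :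
    coeff f k = coeff g k := by
  unfold coeff
  rw [(h.eventuallyEq_of_mem (ball_mem_nhds 0 one_pos)).iteratedDeriv_eq k]

theorem contDiffAt_origin {f : ℂ → ℂ} (hf : DifferentiableOn ℂ f (ball (0 : ℂ) 1)) {k : ℕ} :
    ContDiffAt ℂ k f 0 :=
  (hf.contDiffOn isOpen_ball).contDiffAt (ball_mem_nhds 0 one_pos)

theorem coeff_iteratedDeriv (f : ℂ → ℂ) (n k : ℕ) :
    coeff (iteratedDeriv n f) k
      = (((k + n).factorial / k.factorial : ℝ) : ℂ) * coeff f (k + n) := by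
  unfold coeff
  rw [iteratedDeriv_eq_iterate, iteratedDeriv_eq_iterate, iteratedDeriv_eq_iterate,
    Function.iterate_add_apply]
  have := Nat.factorial_ne_zero k
  have := Nat.factorial_ne_zero (k + n)
  push_cast
  field_simp

theorem coeff_add {f g : ℂ → ℂ} (hf : DifferentiableOn ℂ f (ball (0 : ℂ) 1))
    (hg : DifferentiableOn ℂ g (ball (0 : ℂ) 1)) (k : ℕ) :
    coeff (fun z => f z + g z) k = coeff f k + coeff g k := by
  unfold coeff
  rw [iteratedDeriv_fun_add (contDiffAt_origin hf) (contDiffAt_origin hg), add_div]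

theorem coeff_const_mul (c : ℂ) (f : ℂ → ℂ) (k : ℕ) :
    coeff (fun z => c * f z) k = c * coeff f k := by
  unfold coeff
  rw [iteratedDeriv_const_mul_field, mul_div_assoc]

theorem coeff_const_add_mul_zero (c lam : ℂ) (g : ℂ → ℂ) :
    coeff (fun z => c + (z - lam) * g z) 0 = c - lam * coeff g 0 := by
  simp [coeff]; ring

theorem coeff_const_add_mul_succ (c lam : ℂ) {g : ℂ → ℂ}
    (hg : DifferentiableOn ℂ g (ball (0 : ℂ) 1)) (k : ℕ) :
    coeff (fun z => c + (z - lam) * g z) (k + 1) = coeff g k - lam * coeff g (k + 1) := by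
  unfold coeff
  rw [iteratedDeriv_const_add (by omega), iteratedDeriv_fun_mul (by fun_prop) (contDiffAt_origin hg),
    Finset.sum_range_succ', Finset.sum_range_succ']
  have hz : ∑ i ∈ Finset.range k, ((k + 1).choose (i + 1 + 1) : ℂ) *
      iteratedDeriv (i + 1 + 1) (fun z : ℂ => z - lam) 0 *
        iteratedDeriv (k + 1 - (i + 1 + 1)) g 0 = 0 := by
    refine Finset.sum_eq_zero fun i _ => ?_
    have : iteratedDeriv (i + 1 + 1) (fun z : ℂ => z - lam) 0 = 0 := by
      rw [iteratedDeriv_succ', iteratedDeriv_succ']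
      simp
    rw [this]; simp
  rw [hz]
  have h1 : iteratedDeriv (0 + 1) (fun z : ℂ => z - lam) 0 = 1 := by simp
  rw [h1, Nat.factorial_succ]
  have := Nat.factorial_ne_zero k
  have : (k : ℂ) + 1 ≠ 0 := by exact_mod_cast k.succ_ne_zero
  simp
  field_simp
  ring

theorem differentiableOn_iteratedDeriv {f : ℂ → ℂ} (hf : DifferentiableOn ℂ f (ball (0 : ℂ) 1))
    (n : ℕ) : DifferentiableOn ℂ (iteratedDeriv n f) (ball (0 : ℂ) 1) := by
  induction n with
  | zero => simpa using hf
  | succ n ih => rw [iteratedDeriv_succ]; exact ih.deriv isOpen_ball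

theorem sub_ne_zero_of_mem {lam z : ℂ} (hlam : lam ∈ sphere (0 : ℂ) 1)
    (hz : z ∈ ball (0 : ℂ) 1) : z - lam ≠ 0 := by
  rw [mem_sphere_zero_iff_norm] at hlam
  rw [mem_ball_zero_iff] at hz
  intro h
  rw [sub_eq_zero.1 h] at hz
  linarith

theorem differentiableOn_div_sub {f : ℂ → ℂ} {lam : ℂ} (hlam : lam ∈ sphere (0 : ℂ) 1)
    (hf : DifferentiableOn ℂ f (ball (0 : ℂ) 1)) :
    DifferentiableOn ℂ (fun z => f z / (z - lam)) (ball (0 : ℂ) 1) :=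
  hf.div (by fun_prop) fun _ hz => sub_ne_zero_of_mem hlam hz

/-! ### Finiteness of the two Dirichlet-type integrals -/

theorem Dsig_lt_top_iff' (m : ℕ) (g : ℂ → ℂ) :
    Dsig m g < ⊤ ↔ Summable fun k : ℕ => (k.choose m : ℝ) * ‖coeff g k‖ ^ 2 := by
  rw [← tsum_ofReal_lt_top (fun k => by positivity)]
  unfold Dsig
  refine Eq.to_iff (congrArg (· < ⊤) (tsum_congr fun k => ?_))
  rw [ENNReal.ofReal_mul (by positivity), ENNReal.ofReal_pow (norm_nonneg _), ofReal_norm,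
    ENNReal.ofReal_natCast]
  rfl

theorem Dsig_lt_top_iff (m : ℕ) (g : ℂ → ℂ) :
    Dsig m g < ⊤ ↔ Summable fun k : ℕ => wt m k * ‖coeff g (k + m)‖ ^ 2 := by
  rw [Dsig_lt_top_iff', ← summable_nat_add_iff m,
    ← summable_mul_left_iff (a := (m.factorial : ℝ)) (by positivity)]
  refine Eq.to_iff (congrArg Summable (funext fun k => ?_))
  unfold wt
  have h := Nat.add_choose_mul_factorial_mul_factorial k m
  have h' : ((k + m).choose m : ℝ) * k.factorial * m.factorial = (k + m).factorial := by
    exact_mod_cast h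
  rw [← h']
  field_simp

/-- With `u = f^(m+1) / (z - λ)`, the integrand of `Dloc` is `|u|² (1 - |z|²)^(m+1)`, so finiteness is
a weighted `ℓ²` condition on the Taylor coefficients of `u`. -/
theorem Dloc_lt_top_iff {lam : ℂ} (hlam : lam ∈ sphere (0 : ℂ) 1) (m : ℕ) {f : ℂ → ℂ}
    (hf : DifferentiableOn ℂ f (ball (0 : ℂ) 1)) :
    Dloc lam (m + 1) f < ⊤ ↔ Summable fun k : ℕ =>
      ‖coeff (fun z => iteratedDeriv (m + 1) f z / (z - lam)) k‖ ^ 2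
        / (((k : ℝ) + 1) * wt m (k + 1) * (k + m + 2)) := by
  set u : ℂ → ℂ := fun z => iteratedDeriv (m + 1) f z / (z - lam) with hu
  have hud : DifferentiableOn ℂ u (ball (0 : ℂ) 1) :=
    differentiableOn_div_sub hlam (differentiableOn_iteratedDeriv hf _)
  have hval : ∫⁻ z in ball (0 : ℂ) 1, (‖iteratedDeriv (m + 1) f z‖₊ : ℝ≥0∞) ^ 2 *
      ENNReal.ofReal (((1 - ‖z‖^2) / ‖z - lam‖^2) * (1 - ‖z‖^2)^(m + 1 - 1)) ∂nA
      = (ENNReal.ofReal Real.pi)⁻¹ * ∑' k : ℕ, ENNReal.ofReal (Real.pi * (m + 1).factorial *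
          (‖coeff u k‖ ^ 2 * (k.factorial / (k + (m + 1) + 1).factorial))) := by
    rw [← lintegral_disc hud, nA, Measure.restrict_smul, lintegral_smul_measure, smul_eq_mul]
    congr 1
    refine setLIntegral_congr_fun measurableSet_ball fun z hz => ?_
    have hz0 : 0 < ‖z - lam‖ := norm_pos_iff.2 (sub_ne_zero_of_mem hlam hz)
    have hz1 : 0 ≤ 1 - ‖z‖ ^ 2 := by
      rw [mem_ball_zero_iff] at hz
      nlinarith [norm_nonneg z]
    have e : ∀ w : ℂ, (‖w‖₊ : ℝ≥0∞) ^ 2 = ENNReal.ofReal (‖w‖ ^ 2) := fun w => by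
      rw [ENNReal.ofReal_pow (norm_nonneg _), ofReal_norm]; rfl
    simp only [e]
    rw [← ENNReal.ofReal_mul (by positivity), ← ENNReal.ofReal_mul (by positivity), hu]
    congr 1
    simp only [norm_div, Nat.add_sub_cancel]
    field_simp
    ring
  have hpi : ENNReal.ofReal Real.pi ≠ 0 := by simp [Real.pi_pos]
  have hfac : 0 < ENNReal.ofReal (1 / (((m + 1).factorial : ℝ) * ((m + 1 - 1).factorial : ℝ))) := by
    rw [ENNReal.ofReal_pos]; positivity
  rw [Dloc, hval, ENNReal.mul_lt_top_iff, ENNReal.mul_lt_top_iff]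
  have hS : ∑' k : ℕ, ENNReal.ofReal (Real.pi * (m + 1).factorial *
        (‖coeff u k‖ ^ 2 * (k.factorial / (k + (m + 1) + 1).factorial))) < ⊤ ↔
      Summable fun k : ℕ => ‖coeff u k‖ ^ 2 / (((k : ℝ) + 1) * wt m (k + 1) * (k + m + 2)) := by
    rw [tsum_ofReal_lt_top (fun k => by positivity), summable_mul_left_iff (by positivity)]
    refine Eq.to_iff (congrArg Summable (funext fun k => ?_))
    unfold wt
    rw [show k + (m + 1) + 1 = (k + 1 + m) + 1 by ring, Nat.factorial_succ, Nat.factorial_succ k]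
    have := Nat.factorial_ne_zero k
    have := Nat.factorial_ne_zero (k + 1 + m)
    have : (k + m + 2 : ℝ) ≠ 0 := by positivity
    push_cast
    field_simp
    ring
  rw [← hS]
  constructor
  · rintro (h | h | h)
    · rcases h.2 with h | h | h
      · exact h.2
      · exact absurd h (ENNReal.inv_ne_zero.2 ENNReal.ofReal_ne_top)
      · rw [h]; exact ENNReal.zero_lt_top
    · exact absurd h hfac.ne'
    · rcases mul_eq_zero.1 h with h | h
      · exact absurd h (ENNReal.inv_ne_zero.2 ENNReal.ofReal_ne_top)
      · rw [h]; exact ENNReal.zero_lt_top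
  · exact fun h => Or.inl ⟨ENNReal.ofReal_lt_top,
      Or.inl ⟨(ENNReal.inv_lt_top).2 (pos_iff_ne_zero.2 hpi), h⟩⟩

/-! ### The decomposition `f = c + (z - λ) g` -/

/-- The Taylor coefficients of `u = f^(m+1) / (z - λ)`, rotated by powers of `λ` so that the recursion
coming from `f^(m+1) = (z - λ) u` becomes a difference equation, and shifted by one place so that
the initial value is `0`. -/
noncomputable def Vseq (lam : ℂ) (m : ℕ) (f : ℂ → ℂ) : ℕ → ℂ
  | 0 => 0
  | k + 1 => lam ^ (k + m + 2) * coeff (fun z => iteratedDeriv (m + 1) f z / (z - lam)) k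

/-- The coefficients of `f^(m+1) = (z - λ) u`, read as a difference equation for `Vseq`. -/
theorem Vseq_sub {lam : ℂ} (hlam : lam ∈ sphere (0 : ℂ) 1) (m : ℕ) {f : ℂ → ℂ}
    (hf : DifferentiableOn ℂ f (ball (0 : ℂ) 1)) (K : ℕ) :
    Vseq lam m f (K + 1) - Vseq lam m f K
      = -((((K : ℝ) + 1) * wt m (K + 1) : ℝ) : ℂ) * (lam ^ (K + m + 1) * coeff f (K + m + 1)) := by
  set u : ℂ → ℂ := fun z => iteratedDeriv (m + 1) f z / (z - lam) with hu
  have hud : DifferentiableOn ℂ u (ball (0 : ℂ) 1) :=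
    differentiableOn_div_sub hlam (differentiableOn_iteratedDeriv hf _)
  have hcw : (((K + (m + 1)).factorial / K.factorial : ℝ) : ℂ)
      = ((((K : ℝ) + 1) * wt m (K + 1) : ℝ) : ℂ) := by
    congr 1
    unfold wt
    rw [show K + (m + 1) = K + 1 + m by ring, Nat.factorial_succ K]
    have := Nat.factorial_ne_zero K
    push_cast
    field_simp
  have h1 := coeff_iteratedDeriv f (m + 1) K
  rw [hcw] at h1
  have h2 : coeff (iteratedDeriv (m + 1) f) K = coeff (fun z => 0 + (z - lam) * u z) K := by
    refine coeff_congr (fun z hz => ?_) K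
    have := sub_ne_zero_of_mem hlam hz
    simp only [hu]
    field_simp
    ring
  rw [h2] at h1
  cases K with
  | zero =>
    rw [coeff_const_add_mul_zero] at h1
    simp only [Vseq]
    rw [show 0 + (m + 1) = 0 + m + 1 by ring] at h1
    rw [← hu]
    linear_combination -lam ^ (0 + m + 1) * h1
  | succ k =>
    rw [coeff_const_add_mul_succ _ _ hud] at h1
    simp only [Vseq]
    rw [show k + 1 + (m + 1) = k + 1 + m + 1 by ring] at h1
    rw [← hu]
    linear_combination -lam ^ (k + 1 + m + 1) * h1

theorem norm_Vseq {lam : ℂ} (hlam : lam ∈ sphere (0 : ℂ) 1) (m : ℕ) (f : ℂ → ℂ) (k : ℕ) :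
    ‖Vseq lam m f (k + 1)‖ = ‖coeff (fun z => iteratedDeriv (m + 1) f z / (z - lam)) k‖ := by
  rw [mem_sphere_zero_iff_norm] at hlam
  simp [Vseq, hlam]

theorem Dloc_lt_top_iff_Vseq {lam : ℂ} (hlam : lam ∈ sphere (0 : ℂ) 1) (m : ℕ) {f : ℂ → ℂ}
    (hf : DifferentiableOn ℂ f (ball (0 : ℂ) 1)) :
    Dloc lam (m + 1) f < ⊤ ↔ Summable fun k : ℕ =>
      ‖Vseq lam m f (k + 1)‖ ^ 2 / (((k : ℝ) + 1) * wt m (k + 1) * (k + m + 2)) := by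
  rw [Dloc_lt_top_iff hlam m hf]
  simp only [norm_Vseq hlam]

/-- `f ∈ H_{λ,m+1}` exactly when `f = c + (z - λ) g` with `g ∈ H_{σ,m}`; here `c` plays the role of the
boundary value `f*(λ)`. -/
theorem Dloc_lt_top_iff_exists {lam : ℂ} (hlam : lam ∈ sphere (0 : ℂ) 1) (m : ℕ) {f : ℂ → ℂ}
    (hf : DifferentiableOn ℂ f (ball (0 : ℂ) 1)) :
    Dloc lam (m + 1) f < ⊤ ↔ ∃ (c : ℂ) (g : ℂ → ℂ), DifferentiableOn ℂ g (ball (0 : ℂ) 1) ∧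
      Dsig m g < ⊤ ∧ ∀ z ∈ ball (0 : ℂ) 1, f z = c + (z - lam) * g z := by
  have hl1 : ‖lam‖ = 1 := mem_sphere_zero_iff_norm.1 hlam
  have hnorm : ∀ (g : ℂ → ℂ) (k : ℕ), ‖lam ^ (k + m + 1) * coeff g (k + m)‖ = ‖coeff g (k + m)‖ := by
    intro g k
    rw [norm_mul, norm_pow, hl1, one_pow, one_mul]
  have hrec : ∀ (c : ℂ) (g : ℂ → ℂ), DifferentiableOn ℂ g (ball (0 : ℂ) 1) →
      (∀ z ∈ ball (0 : ℂ) 1, f z = c + (z - lam) * g z) → ∀ k, lam ^ (k + 1) * coeff f (k + 1)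
        = lam ^ (k + 1) * coeff g k - lam ^ (k + 2) * coeff g (k + 1) := by
    intro c g hg hfg k
    rw [coeff_congr hfg, coeff_const_add_mul_succ _ _ hg]
    ring
  rw [Dloc_lt_top_iff_Vseq hlam m hf]
  constructor
  · intro hs
    obtain ⟨H, hH, hHs⟩ := seq_backward (V := Vseq lam m f) rfl hs
    -- `c` is forced by requiring `H 0` to be the rotated coefficient of `g` of index `m`
    set c : ℂ := H 0 + ∑ i ∈ Finset.range (m + 1), lam ^ i * coeff f i with hc
    set g : ℂ → ℂ := fun z => (f z - c) / (z - lam) with hg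
    have hgd : DifferentiableOn ℂ g (ball (0 : ℂ) 1) :=
      differentiableOn_div_sub hlam (hf.sub_const c)
    have hfg : ∀ z ∈ ball (0 : ℂ) 1, f z = c + (z - lam) * g z := fun z hz => by
      have := sub_ne_zero_of_mem hlam hz
      simp only [hg]
      field_simp
      ring
    have hgk : ∀ k, lam ^ (k + 1) * coeff g k
        = c - ∑ i ∈ Finset.range (k + 1), lam ^ i * coeff f i := by
      intro k
      induction k with
      | zero =>
        have := coeff_congr hfg 0
        rw [coeff_const_add_mul_zero] at this
        rw [Finset.sum_range_one]
        linear_combination this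
      | succ k ih =>
        rw [Finset.sum_range_succ]
        linear_combination ih + hrec c g hgd hfg k
    have hHg : ∀ k, H k = lam ^ (k + m + 1) * coeff g (k + m) := by
      intro k
      induction k with
      | zero => rw [zero_add, hgk m, hc]; ring
      | succ k ih =>
        have h1 := hH k
        rw [Vseq_sub hlam m hf] at h1
        have hne : ((((k : ℝ) + 1) * wt m (k + 1) : ℝ) : ℂ) ≠ 0 := by
          have := wt_pos m (k + 1)
          exact_mod_cast (by positivity : ((k : ℝ) + 1) * wt m (k + 1) ≠ 0)
        have h2 : H (k + 1) - H k = -(lam ^ (k + m + 1) * coeff f (k + m + 1)) :=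
          mul_left_cancel₀ hne (by rw [h1]; ring)
        have h3 := hrec c g hgd hfg (k + m)
        rw [show k + 1 + m = k + m + 1 by ring]
        linear_combination h2 + ih - h3
    refine ⟨c, g, hgd, (Dsig_lt_top_iff m g).2 ?_, hfg⟩
    simpa only [hHg, hnorm] using hHs
  · rintro ⟨c, g, hgd, hgs, hfg⟩
    rw [Dsig_lt_top_iff] at hgs
    refine seq_forward (H := fun k => lam ^ (k + m + 1) * coeff g (k + m)) rfl (fun K => ?_)
      (by simpa only [hnorm] using hgs)
    rw [Vseq_sub hlam m hf]
    have h3 := hrec c g hgd hfg (K + m)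
    rw [show K + 1 + m = K + m + 1 by ring]
    linear_combination (-((((K : ℝ) + 1) * wt m (K + 1) : ℝ) : ℂ)) * -h3

/-! ### Multipliers -/

theorem Dsig_add_lt_top {m : ℕ} {g h : ℂ → ℂ} (hg : DifferentiableOn ℂ g (ball (0 : ℂ) 1))
    (hh : DifferentiableOn ℂ h (ball (0 : ℂ) 1)) (c : ℂ) (hgs : Dsig m g < ⊤)
    (hhs : Dsig m h < ⊤) : Dsig m (fun z => c * g z + h z) < ⊤ := by
  rw [Dsig_lt_top_iff] at *
  refine Summable.of_nonneg_of_le (fun k => by have := wt_pos m k; positivity) (fun k => ?_)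
    ((hgs.mul_left (2 * ‖c‖ ^ 2)).add (hhs.mul_left 2))
  rw [coeff_add (hg.const_mul c) hh, coeff_const_mul c g]
  have h1 : ‖c * coeff g (k + m) + coeff h (k + m)‖
      ≤ ‖c‖ * ‖coeff g (k + m)‖ + ‖coeff h (k + m)‖ :=
    (norm_add_le _ _).trans_eq (by rw [norm_mul])
  have h2 : ‖c * coeff g (k + m) + coeff h (k + m)‖ ^ 2
      ≤ 2 * (‖c‖ * ‖coeff g (k + m)‖) ^ 2 + 2 * ‖coeff h (k + m)‖ ^ 2 := by
    refine (pow_le_pow_left₀ (norm_nonneg _) h1 2).trans ?_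
    nlinarith [sq_nonneg (‖c‖ * ‖coeff g (k + m)‖ - ‖coeff h (k + m)‖)]
  calc _ ≤ wt m k * (2 * (‖c‖ * ‖coeff g (k + m)‖) ^ 2 + 2 * ‖coeff h (k + m)‖ ^ 2) :=
        mul_le_mul_of_nonneg_left h2 (wt_pos m k).le
    _ = _ := by ring

/-- Functions with `Dsig m` finite have square-summable coefficients, hence grow at most like
`(1 - |z|)^(-1/2)` by the Cauchy–Schwarz inequality. -/
theorem growth {m : ℕ} {g : ℂ → ℂ} (hg : DifferentiableOn ℂ g (ball (0 : ℂ) 1))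
    (hgs : Dsig m g < ⊤) : ∃ C : ℝ, 0 ≤ C ∧ ∀ z ∈ ball (0 : ℂ) 1,
      ‖g z‖ * √(1 - ‖z‖) ≤ C := by
  have hsq : Summable fun k => ‖coeff g k‖ ^ 2 := by
    rw [Dsig_lt_top_iff] at hgs
    rw [← summable_nat_add_iff m]
    refine Summable.of_nonneg_of_le (fun k => by positivity) (fun k => ?_) hgs
    nlinarith [one_le_wt m k, sq_nonneg ‖coeff g (k + m)‖]
  refine ⟨√(∑' k, ‖coeff g k‖ ^ 2), Real.sqrt_nonneg _, fun z hz => ?_⟩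
  have hz1 : ‖z‖ < 1 := mem_ball_zero_iff.1 hz
  have hsum := hasSum_coeff hg hz
  have hgeo : HasSum (fun k => (‖z‖ ^ k) ^ 2) (1 - ‖z‖ ^ 2)⁻¹ := by
    have := hasSum_geometric_of_lt_one (sq_nonneg ‖z‖) (by nlinarith [norm_nonneg z])
    simpa only [← pow_mul, mul_comm] using this
  have hcs := Real.inner_le_Lp_mul_Lq_tsum_of_nonneg Real.HolderConjugate.two_two
    (f := fun k => ‖coeff g k‖) (g := fun k => ‖z‖ ^ k) (fun k => norm_nonneg _)
    (fun k => by positivity) (by simpa using hsq) (by simpa using hgeo.summable)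
  have hcsum := Real.summable_mul_of_Lp_Lq_of_nonneg Real.HolderConjugate.two_two
    (f := fun k => ‖coeff g k‖) (g := fun k => ‖z‖ ^ k) (fun k => norm_nonneg _)
    (fun k => by positivity) (by simpa using hsq) (by simpa using hgeo.summable)
  have hle : ‖g z‖ ≤ ∑' k, ‖coeff g k‖ * ‖z‖ ^ k := by
    rw [← hsum.tsum_eq]
    have := norm_tsum_le_tsum_norm (f := fun k => coeff g k * z ^ k)
      (by simpa only [norm_mul, norm_pow] using hcsum)
    simpa only [norm_mul, norm_pow] using this
  have h2 := hle.trans hcs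
  simp only [Real.rpow_two, ← Real.sqrt_eq_rpow, hgeo.tsum_eq] at h2
  have hp : 0 < 1 - ‖z‖ ^ 2 := by nlinarith [norm_nonneg z]
  calc ‖g z‖ * √(1 - ‖z‖) ≤ (√(∑' k, ‖coeff g k‖ ^ 2) * √(1 - ‖z‖ ^ 2)⁻¹) * √(1 - ‖z‖ ^ 2) := by
        gcongr
        nlinarith [norm_nonneg z]
    _ = _ := by
        rw [Real.sqrt_inv, mul_assoc, inv_mul_cancel₀ (Real.sqrt_pos.2 hp).ne', mul_one]

/-- The multiplier criterion for the order `n = m + 1`. -/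
theorem multiplier_iff (lam : ℂ) (hlam : lam ∈ sphere (0:ℂ) 1) (m : ℕ)
    (φ : ℂ → ℂ) (hφ : DifferentiableOn ℂ φ (ball (0:ℂ) 1)) :
    (∀ f : ℂ → ℂ, DifferentiableOn ℂ f (ball (0:ℂ) 1) → Dloc lam (m + 1) f < ⊤ →
      Dloc lam (m + 1) (fun z => φ z * f z) < ⊤) ↔
    (Dloc lam (m + 1) φ < ⊤ ∧
      ∀ h : ℂ → ℂ, DifferentiableOn ℂ h (ball (0:ℂ) 1) → Dsig m h < ⊤ →
        Dsig m (fun z => φ z * h z) < ⊤) := by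
  have hl1 : ‖lam‖ = 1 := mem_sphere_zero_iff_norm.1 hlam
  constructor
  · intro hmul
    have hφD : Dloc lam (m + 1) φ < ⊤ := by
      have h0 : Dsig m (fun _ => 0) < ⊤ := by
        have : ∀ k, coeff (fun _ => 0) k = 0 := fun k => by simp [coeff]
        simp [Dsig, this]
      have := hmul (fun _ => 1) (by fun_prop) ((Dloc_lt_top_iff_exists hlam m (by fun_prop)).2
        ⟨1, fun _ => 0, by fun_prop, h0, fun z _ => by simp⟩)
      simpa using this
    refine ⟨hφD, fun h hh hhs => ?_⟩
    have hfd : DifferentiableOn ℂ (fun z => (z - lam) * h z) (ball (0 : ℂ) 1) :=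
      DifferentiableOn.mul (by fun_prop) hh
    have hf := hmul _ hfd ((Dloc_lt_top_iff_exists hlam m hfd).2 ⟨0, h, hh, hhs, fun z _ => by ring⟩)
    obtain ⟨c, k, hk, hks, hck⟩ := (Dloc_lt_top_iff_exists hlam m (hφ.fun_mul hfd)).1 hf
    obtain ⟨c', φ₁, hφ₁, hφ₁s, hcφ⟩ := (Dloc_lt_top_iff_exists hlam m hφ).1 hφD
    obtain ⟨A, hA0, hA⟩ := growth hh hhs
    obtain ⟨B, hB0, hB⟩ := growth hk hks
    obtain ⟨C, hC0, hC⟩ := growth hφ₁ hφ₁s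
    -- evaluate at `z = (1 - s²) λ`, where the growth bounds give `c = O(s)`
    have hbound : ∀ s : ℝ, 0 < s → s < 1 → ‖c‖ ≤ s * (‖c'‖ * A + C * A + B) := by
      intro s hs0 hs1
      have ht0 : 0 < 1 - s ^ 2 := by nlinarith
      set z : ℂ := ((1 - s ^ 2 : ℝ) : ℂ) * lam with hz
      have hzn : ‖z‖ = 1 - s ^ 2 := by
        rw [hz, norm_mul, hl1, mul_one, Complex.norm_real, Real.norm_of_nonneg ht0.le]
      have hzb : z ∈ ball (0 : ℂ) 1 := by rw [mem_ball_zero_iff, hzn]; nlinarith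
      have hzl : ‖z - lam‖ = s ^ 2 := by
        have : z - lam = ((-s ^ 2 : ℝ) : ℂ) * lam := by rw [hz]; push_cast; ring
        rw [this, norm_mul, hl1, mul_one, Complex.norm_real, Real.norm_eq_abs, abs_neg,
          abs_of_nonneg (sq_nonneg s)]
      have hsq : √(1 - ‖z‖) = s := by
        rw [hzn, sub_sub_cancel, Real.sqrt_sq hs0.le]
      have hA' := hA z hzb
      have hB' := hB z hzb
      have hC' := hC z hzb
      rw [hsq] at hA' hB' hC'
      have hceq : c = c' * ((z - lam) * h z) + (z - lam) * φ₁ z * ((z - lam) * h z)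
          - (z - lam) * k z := by
        have h1 := hck z hzb
        have h2 := hcφ z hzb
        rw [h2] at h1
        linear_combination -h1
      calc ‖c‖ ≤ ‖c'‖ * (s ^ 2 * ‖h z‖) + s ^ 2 * ‖φ₁ z‖ * (s ^ 2 * ‖h z‖) + s ^ 2 * ‖k z‖ := by
            conv_lhs => rw [hceq]
            refine (norm_sub_le _ _).trans ?_
            refine add_le_add ((norm_add_le _ _).trans ?_) ?_
            · simp only [norm_mul, hzl]; exact le_rfl
            · simp only [norm_mul, hzl]; exact le_rfl
        _ = s * (‖c'‖ * (‖h z‖ * s) + s * ((‖φ₁ z‖ * s) * (‖h z‖ * s)) + ‖k z‖ * s) := by ring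
        _ ≤ s * (‖c'‖ * A + 1 * (C * A) + B) := by gcongr
        _ = _ := by ring
    have hc0 : c = 0 := by
      rw [← norm_le_zero_iff]
      have ht : Filter.Tendsto (fun s : ℝ => s * (‖c'‖ * A + C * A + B))
          (nhdsWithin 0 (Set.Ioi 0)) (nhds 0) := by
        have : Filter.Tendsto (fun s : ℝ => s * (‖c'‖ * A + C * A + B)) (nhds 0) (nhds (0 * _)) :=
          Filter.Tendsto.mul_const _ Filter.tendsto_id
        rw [zero_mul] at this
        exact this.mono_left nhdsWithin_le_nhds
      refine ge_of_tendsto ht ?_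
      filter_upwards [Ioo_mem_nhdsGT (zero_lt_one' ℝ)] with s hs
      exact hbound s hs.1 hs.2
    have hcoe : ∀ j, coeff (fun z => φ z * h z) j = coeff k j := fun j => by
      refine coeff_congr (fun z hz => ?_) j
      have h1 := hck z hz
      rw [hc0, zero_add] at h1
      refine mul_left_cancel₀ (sub_ne_zero_of_mem hlam hz) ?_
      rw [← h1]; ring
    simpa only [Dsig, hcoe] using hks
  · rintro ⟨hφD, hmul⟩ f hf hfD
    obtain ⟨c, g, hg, hgs, hfg⟩ := (Dloc_lt_top_iff_exists hlam m hf).1 hfD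
    obtain ⟨c', φ₁, hφ₁, hφ₁s, hcφ⟩ := (Dloc_lt_top_iff_exists hlam m hφ).1 hφD
    refine (Dloc_lt_top_iff_exists hlam m (hφ.fun_mul hf)).2 ⟨c * c', fun z => c * φ₁ z + φ z * g z,
      (hφ₁.const_mul c).fun_add (hφ.fun_mul hg), Dsig_add_lt_top hφ₁ (hφ.fun_mul hg) c hφ₁s (hmul g hg hgs),
      fun z hz => ?_⟩
    have h1 := hcφ z hz
    rw [hfg z hz]
    linear_combination c * h1

theorem stmt14 (lam : ℂ) (hlam : lam ∈ sphere (0:ℂ) 1) (n : ℕ) (hn : 1 ≤ n)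
    (φ : ℂ → ℂ) (hφ : DifferentiableOn ℂ φ (ball (0:ℂ) 1)) :
    -- φ is a multiplier of H_{λ,n}
    (∀ f : ℂ → ℂ, DifferentiableOn ℂ f (ball (0:ℂ) 1) → Dloc lam n f < ⊤ →
      Dloc lam n (fun z => φ z * f z) < ⊤) ↔
    -- φ ∈ H_{λ,n} ∩ Mult(H_{σ,n-1})
    (Dloc lam n φ < ⊤ ∧
      ∀ h : ℂ → ℂ, DifferentiableOn ℂ h (ball (0:ℂ) 1) → Dsig (n-1) h < ⊤ →
        Dsig (n-1) (fun z => φ z * h z) < ⊤) := by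
  obtain ⟨m, rfl⟩ : ∃ m, n = m + 1 := ⟨n - 1, by omega⟩
  exact multiplier_iff lam hlam m φ hφ
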